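/- Let G ∈ ℂ^{p×k} and V ∈ ℂ^{n×p}. Then σ_p(G ⊙^T V^T) ≥ σ_p(G) · σ_p(V). If moreover every column of V has unit Euclidean norm, then σ_p(V) ≥ κ₂(V)^{−1} where κ₂(V) = σ_1(V)/σ_p(V), and hence σ_p(G ⊙^T V^T) ≥ σ_p(G)/κ₂(V); in particular, if p ≤ kn and G ⊙^T V^T has full row rank, then ‖(G ⊙^T V^T)†‖₂ ≤ σ_p(G)^{−1} κ₂(V). -/

import Mathlib

open Matrix Kronecker BigOperators

noncomputable section

/-- Frobenius norm of a complex matrix. -/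
def fnorm {ι κ : Type*} [Fintype ι] [Fintype κ] (A : Matrix ι κ ℂ) : ℝ :=
  Real.sqrt (∑ i, ∑ j, ‖A i j‖ ^ 2)

/-- Euclidean norm of a complex vector. -/
def vnorm {ι : Type*} [Fintype ι] (v : ι → ℂ) : ℝ :=
  Real.sqrt (∑ i, ‖v i‖ ^ 2)

/-- The four Moore–Penrose conditions. -/
def IsMoorePenrose {ι κ : Type*} [Fintype ι] [Fintype κ]
    (A : Matrix ι κ ℂ) (B : Matrix κ ι ℂ) : Prop :=
  A * B * A = A ∧ B * A * B = B ∧ (A * B)ᴴ = A * B ∧ (B * A)ᴴ = B * A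

open scoped Classical in
/-- The Moore–Penrose pseudoinverse (defined by choice; it always exists and is unique). -/
noncomputable def pinv {ι κ : Type*} [Fintype ι] [Fintype κ] (A : Matrix ι κ ℂ) :
    Matrix κ ι ℂ :=
  if h : ∃ B, IsMoorePenrose A B then h.choose else 0

/-- `s` is a singular value of `A`: `s ≥ 0` and `s²` is an eigenvalue of `Aᴴ A`. -/
def IsSingularValue {ι κ : Type*} [Fintype ι] [Fintype κ] (A : Matrix ι κ ℂ) (s : ℝ) : Prop :=
  0 ≤ s ∧ ∃ w : κ → ℂ, w ≠ 0 ∧ (Aᴴ * A).mulVec w = ((s : ℂ) ^ 2) • w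

/-- The smallest nonzero singular value of `A`, i.e. `σ_p̂(A)` where `p̂ = rank A`. -/
noncomputable def sigmaMinPos {ι κ : Type*} [Fintype ι] [Fintype κ] (A : Matrix ι κ ℂ) : ℝ :=
  sInf {s : ℝ | IsSingularValue A s ∧ 0 < s}

/-- The smallest singular value of a square matrix `A`, the minimum of `‖A v‖₂` over
unit vectors `v`. -/
noncomputable def sigmaMinSq {n : ℕ} (A : Matrix (Fin n) (Fin n) ℂ) : ℝ :=
  sInf {x : ℝ | ∃ w : Fin n → ℂ, vnorm w = 1 ∧ x = vnorm (A.mulVec w)}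

/-- The transposed Khatri–Rao product `G ⊙^T W` of `G : p × k` and `W : p × n`:
the `p × kn` matrix whose `i`-th row is `[G i 1 • (row i of W), …, G i k • (row i of W)]`. -/
def krt {p k n : ℕ} (G : Matrix (Fin p) (Fin k) ℂ) (W : Matrix (Fin p) (Fin n) ℂ) :
    Matrix (Fin p) (Fin k × Fin n) ℂ :=
  Matrix.of fun i jl => G i jl.1 * W i jl.2

/-- `σ_p(A)` for a matrix `A` with rows indexed by `ι` (`|ι| = p`): the smallest of the first
`p` singular values, characterized variationally as the minimum of `‖w^* A‖₂` over unit
vectors `w`. -/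
noncomputable def sigRowMin {ι κ : Type*} [Fintype ι] [Fintype κ] (A : Matrix ι κ ℂ) : ℝ :=
  sInf {x : ℝ | ∃ w : ι → ℂ, vnorm w = 1 ∧ x = vnorm (Matrix.vecMul (star w) A)}

/-- `σ_p(A)` for a matrix `A` with columns indexed by `κ` (`|κ| = p`): the smallest of the
first `p` singular values, characterized as the minimum of `‖A w‖₂` over unit vectors `w`. -/
noncomputable def sigColMin {ι κ : Type*} [Fintype ι] [Fintype κ] (A : Matrix ι κ ℂ) : ℝ :=
  sInf {x : ℝ | ∃ w : κ → ℂ, vnorm w = 1 ∧ x = vnorm (A.mulVec w)}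

/-- `σ_1(A)`, the largest singular value (spectral norm) of `A`: the supremum of `‖A w‖₂`
over unit vectors `w`. -/
noncomputable def sigColMax {ι κ : Type*} [Fintype ι] [Fintype κ] (A : Matrix ι κ ℂ) : ℝ :=
  sSup {x : ℝ | ∃ w : κ → ℂ, vnorm w = 1 ∧ x = vnorm (A.mulVec w)}

/-!
Reshaping the entries of `wᵀ (G ⊙ᵀ Vᵀ)` into a matrix gives `V diag(w) G`, so its Euclidean norm is
the Frobenius norm `‖V diag(w) G‖_F ≥ σ_p(V) ‖diag(w)‖_F σ_p(G) = σ_p(V) ‖w‖ σ_p(G)`. A column of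
unit norm forces `σ₁(V) ≥ 1`, hence `κ₂(V)⁻¹ = σ_p(V) / σ₁(V) ≤ σ_p(V)`.

For the pseudoinverse `B` of a matrix `A`, the product `BA` is an orthogonal projection, and
`σ_min(Aᴴ) ‖Bᴴ‖ ≤ ‖Aᴴ Bᴴ‖ = ‖BA‖ ≤ 1`.
-/

section VectorNorm

variable {ι : Type*} [Fintype ι]

lemma vnorm_eq_norm_toLp (v : ι → ℂ) : vnorm v = ‖WithLp.toLp 2 v‖ :=
  (EuclideanSpace.norm_eq _).symm

lemma vnorm_nonneg (v : ι → ℂ) : 0 ≤ vnorm v := Real.sqrt_nonneg _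

lemma sq_vnorm (v : ι → ℂ) : vnorm v ^ 2 = ∑ i, ‖v i‖ ^ 2 :=
  Real.sq_sqrt (by positivity)

lemma vnorm_eq_zero {v : ι → ℂ} : vnorm v = 0 ↔ v = 0 := by
  rw [vnorm_eq_norm_toLp, norm_eq_zero, WithLp.toLp_eq_zero]

lemma vnorm_star (v : ι → ℂ) : vnorm (star v) = vnorm v := by
  simp only [vnorm, Pi.star_apply, norm_star]

lemma vnorm_smul (c : ℂ) (v : ι → ℂ) : vnorm (c • v) = ‖c‖ * vnorm v := by
  rw [vnorm_eq_norm_toLp, vnorm_eq_norm_toLp, WithLp.toLp_smul, norm_smul]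

lemma vnorm_single_one [DecidableEq ι] (i : ι) : vnorm (Pi.single i (1 : ℂ)) = 1 := by
  rw [vnorm_eq_norm_toLp, PiLp.toLp_single, PiLp.norm_single, norm_one]

end VectorNorm

section FrobeniusNorm

variable {ι κ : Type*} [Fintype ι] [Fintype κ]

lemma fnorm_nonneg (A : Matrix ι κ ℂ) : 0 ≤ fnorm A := Real.sqrt_nonneg _

lemma fnorm_conjTranspose (A : Matrix ι κ ℂ) : fnorm Aᴴ = fnorm A := by
  simp only [fnorm, conjTranspose_apply, norm_star]
  rw [Finset.sum_comm]

lemma sq_fnorm_eq_sum_sq_vnorm_col (A : Matrix ι κ ℂ) :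
    fnorm A ^ 2 = ∑ j, vnorm (A.col j) ^ 2 := by
  rw [fnorm, Real.sq_sqrt (by positivity), Finset.sum_comm]
  simp only [sq_vnorm, col_apply]

lemma fnorm_diagonal [DecidableEq ι] (w : ι → ℂ) : fnorm (diagonal w) = vnorm w := by
  simp [fnorm, vnorm, diagonal_apply, apply_ite]

end FrobeniusNorm

section SingularValueBounds

variable {ι κ μ : Type*} [Fintype ι] [Fintype κ] [Fintype μ]

lemma sigColMin_nonneg (A : Matrix ι κ ℂ) : 0 ≤ sigColMin A :=
  Real.sInf_nonneg (by rintro _ ⟨w, -, rfl⟩; exact vnorm_nonneg _)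

lemma bddBelow_vnorm_mulVec (A : Matrix ι κ ℂ) :
    BddBelow {x : ℝ | ∃ w : κ → ℂ, vnorm w = 1 ∧ x = vnorm (A *ᵥ w)} :=
  ⟨0, by rintro _ ⟨w, -, rfl⟩; exact vnorm_nonneg _⟩

lemma sigColMin_mul_vnorm_le (A : Matrix ι κ ℂ) (u : κ → ℂ) :
    sigColMin A * vnorm u ≤ vnorm (A *ᵥ u) := by
  rcases (vnorm_nonneg u).eq_or_lt with hu | hu
  · rw [← hu, mul_zero]
    exact vnorm_nonneg _
  have norm_scale : ‖(vnorm u : ℂ)⁻¹‖ = (vnorm u)⁻¹ := by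
    rw [norm_inv, Complex.norm_of_nonneg hu.le]
  have le_normalized : sigColMin A ≤ vnorm (A *ᵥ ((vnorm u : ℂ)⁻¹ • u)) :=
    csInf_le (bddBelow_vnorm_mulVec A)
      ⟨_, by rw [vnorm_smul, norm_scale, inv_mul_cancel₀ hu.ne'], rfl⟩
  rwa [mulVec_smul, vnorm_smul, norm_scale, inv_mul_eq_div, le_div_iff₀ hu] at le_normalized

lemma sigColMin_of_isEmpty [IsEmpty κ] (A : Matrix ι κ ℂ) : sigColMin A = 0 := by
  simp [sigColMin, vnorm]

lemma le_sigRowMin [Nonempty ι] {A : Matrix ι κ ℂ} {c : ℝ}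
    (h : ∀ w, vnorm w = 1 → c ≤ vnorm (star w ᵥ* A)) : c ≤ sigRowMin A := by
  classical
  refine le_csInf ⟨_, Pi.single (Classical.arbitrary ι) 1, vnorm_single_one _, rfl⟩ ?_
  rintro _ ⟨w, hw, rfl⟩
  exact h w hw

lemma sigRowMin_eq_sigColMin_conjTranspose (A : Matrix ι κ ℂ) :
    sigRowMin A = sigColMin Aᴴ := by
  have vnorm_vecMul_star (w : ι → ℂ) : vnorm (star w ᵥ* A) = vnorm (Aᴴ *ᵥ w) := by
    rw [← vnorm_star, star_vecMul, star_star]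
  simp only [sigRowMin, sigColMin, vnorm_vecMul_star]

lemma sigRowMin_nonneg (A : Matrix ι κ ℂ) : 0 ≤ sigRowMin A :=
  sigRowMin_eq_sigColMin_conjTranspose A ▸ sigColMin_nonneg Aᴴ

lemma sigColMin_mul_fnorm_le (A : Matrix ι κ ℂ) (B : Matrix κ μ ℂ) :
    sigColMin A * fnorm B ≤ fnorm (A * B) := by
  refine le_of_sq_le_sq ?_ (fnorm_nonneg _)
  rw [mul_pow, sq_fnorm_eq_sum_sq_vnorm_col, sq_fnorm_eq_sum_sq_vnorm_col, Finset.mul_sum]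
  refine Finset.sum_le_sum fun j _ => ?_
  rw [← mul_pow]
  exact pow_le_pow_left₀ (mul_nonneg (sigColMin_nonneg A) (vnorm_nonneg _))
    (sigColMin_mul_vnorm_le A (B.col j)) 2

lemma fnorm_mul_sigRowMin_le (B : Matrix μ ι ℂ) (A : Matrix ι κ ℂ) :
    fnorm B * sigRowMin A ≤ fnorm (B * A) := by
  rw [← fnorm_conjTranspose B, ← fnorm_conjTranspose (B * A), conjTranspose_mul,
    sigRowMin_eq_sigColMin_conjTranspose, mul_comm]
  exact sigColMin_mul_fnorm_le Aᴴ Bᴴ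

open scoped Matrix.Norms.L2Operator

lemma sigColMax_eq_l2_opNorm [DecidableEq κ] (A : Matrix ι κ ℂ) : sigColMax A = ‖A‖ := by
  rw [l2_opNorm_def, ← ContinuousLinearMap.sSup_sphere_eq_norm, sigColMax]
  congr 1
  ext x
  simp only [Set.mem_ofPred_eq, Set.mem_image, mem_sphere_zero_iff_norm, vnorm_eq_norm_toLp]
  exact ⟨fun ⟨w, hw, hx⟩ => ⟨WithLp.toLp 2 w, hw, hx.symm⟩,
    fun ⟨w, hw, hx⟩ => ⟨w.ofLp, hw, hx.symm⟩⟩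

lemma vnorm_mulVec_le (A : Matrix ι κ ℂ) (u : κ → ℂ) :
    vnorm (A *ᵥ u) ≤ sigColMax A * vnorm u := by
  classical
  rw [sigColMax_eq_l2_opNorm, vnorm_eq_norm_toLp, vnorm_eq_norm_toLp]
  exact l2_opNorm_mulVec A (WithLp.toLp 2 u)

lemma bddAbove_vnorm_mulVec (A : Matrix ι κ ℂ) :
    BddAbove {x : ℝ | ∃ w : κ → ℂ, vnorm w = 1 ∧ x = vnorm (A *ᵥ w)} := by
  refine ⟨sigColMax A, ?_⟩
  rintro _ ⟨w, hw, rfl⟩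
  simpa only [hw, mul_one] using vnorm_mulVec_le A w

lemma sigColMin_le_sigColMax (A : Matrix ι κ ℂ) : sigColMin A ≤ sigColMax A :=
  Real.sInf_le_sSup _ (bddBelow_vnorm_mulVec A) (bddAbove_vnorm_mulVec A)

lemma sigColMax_nonneg (A : Matrix ι κ ℂ) : 0 ≤ sigColMax A :=
  (sigColMin_nonneg A).trans (sigColMin_le_sigColMax A)

lemma vnorm_col_le_sigColMax (A : Matrix ι κ ℂ) (j : κ) : vnorm (A.col j) ≤ sigColMax A := by
  classical
  simpa only [mulVec_single_one, vnorm_single_one, mul_one] using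
    vnorm_mulVec_le A (Pi.single j 1)

lemma sigColMax_conjTranspose (A : Matrix ι κ ℂ) : sigColMax Aᴴ = sigColMax A := by
  classical
  rw [sigColMax_eq_l2_opNorm, sigColMax_eq_l2_opNorm, l2_opNorm_conjTranspose]

lemma sigColMax_le_one_of_isStarProjection {P : Matrix ι ι ℂ} (hP : IsStarProjection P) :
    sigColMax P ≤ 1 := by
  classical
  rw [sigColMax_eq_l2_opNorm]
  exact hP.norm_le P

lemma sigColMin_mul_sigColMax_le (A : Matrix ι κ ℂ) (B : Matrix κ μ ℂ) :
    sigColMin A * sigColMax B ≤ sigColMax (A * B) := by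
  rcases (sigColMin_nonneg A).eq_or_lt with hA | hA
  · rw [← hA, zero_mul]
    exact sigColMax_nonneg _
  rw [← le_div_iff₀' hA]
  refine Real.sSup_le ?_ (div_nonneg (sigColMax_nonneg _) hA.le)
  rintro _ ⟨w, hw, rfl⟩
  rw [le_div_iff₀' hA]
  calc sigColMin A * vnorm (B *ᵥ w) ≤ vnorm ((A * B) *ᵥ w) := by
        rw [← mulVec_mulVec]
        exact sigColMin_mul_vnorm_le A _
    _ ≤ sigColMax (A * B) := by simpa only [hw, mul_one] using vnorm_mulVec_le (A * B) w

lemma inv_sigColMax_div_sigColMin_le_sigColMin {A : Matrix ι κ ℂ} (hA : ∀ j, 1 ≤ vnorm (A.col j)) :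
    (sigColMax A / sigColMin A)⁻¹ ≤ sigColMin A := by
  rw [inv_div]
  rcases isEmpty_or_nonempty κ with _ | ⟨⟨j⟩⟩
  · rw [sigColMin_of_isEmpty, zero_div]
  · exact div_le_self (sigColMin_nonneg A) ((hA j).trans (vnorm_col_le_sigColMax A j))

end SingularValueBounds

section Pseudoinverse

variable {ι κ : Type*} [Fintype ι] [Fintype κ]

lemma isMoorePenrose_pinv {A : Matrix ι κ ℂ} (h : ∃ B, IsMoorePenrose A B) :
    IsMoorePenrose A (pinv A) := by
  rw [pinv, dif_pos h]
  exact h.choose_spec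

lemma isMoorePenrose_conjTranspose_mul_inv [DecidableEq ι] {A : Matrix ι κ ℂ}
    (hA : IsUnit (A * Aᴴ).det) : IsMoorePenrose A (Aᴴ * (A * Aᴴ)⁻¹) := by
  have right_inverse : A * (Aᴴ * (A * Aᴴ)⁻¹) = 1 := by
    rw [← Matrix.mul_assoc, mul_nonsing_inv _ hA]
  refine ⟨?_, ?_, ?_, ?_⟩
  · rw [right_inverse, Matrix.one_mul]
  · rw [Matrix.mul_assoc, right_inverse, Matrix.mul_one]
  · rw [right_inverse, conjTranspose_one]
  · rw [conjTranspose_mul, conjTranspose_mul, conjTranspose_nonsing_inv,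
      (isHermitian_mul_conjTranspose_self A).eq, conjTranspose_conjTranspose, Matrix.mul_assoc]

open scoped ComplexOrder in
lemma isUnit_det_mul_conjTranspose_of_sigRowMin_pos [DecidableEq ι] {A : Matrix ι κ ℂ}
    (hA : 0 < sigRowMin A) : IsUnit (A * Aᴴ).det := by
  refine isUnit_iff_ne_zero.2 fun hdet => ?_
  obtain ⟨w, hw, hAAw⟩ := exists_mulVec_eq_zero_iff.2 hdet
  have vnorm_pos : 0 < vnorm w := (vnorm_nonneg w).lt_of_ne' (vnorm_eq_zero.not.2 hw)
  have hAw : vnorm (Aᴴ *ᵥ w) = 0 :=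
    vnorm_eq_zero.2 ((self_mul_conjTranspose_mulVec_eq_zero A w).1 hAAw)
  have hA' : 0 < sigColMin Aᴴ := sigRowMin_eq_sigColMin_conjTranspose A ▸ hA
  exact ((mul_pos hA' vnorm_pos).trans_le (sigColMin_mul_vnorm_le Aᴴ w)).ne' hAw

lemma IsMoorePenrose.sigRowMin_mul_sigColMax_le_one {A : Matrix ι κ ℂ} {B : Matrix κ ι ℂ}
    (h : IsMoorePenrose A B) : sigRowMin A * sigColMax B ≤ 1 := by
  obtain ⟨-, hBAB, -, hBA⟩ := h
  have projection : IsStarProjection (B * A) :=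
    ⟨by rw [IsIdempotentElem, ← Matrix.mul_assoc, hBAB], hBA⟩
  calc sigRowMin A * sigColMax B = sigColMin Aᴴ * sigColMax Bᴴ := by
        rw [sigRowMin_eq_sigColMin_conjTranspose, sigColMax_conjTranspose]
    _ ≤ sigColMax (Aᴴ * Bᴴ) := sigColMin_mul_sigColMax_le Aᴴ Bᴴ
    _ = sigColMax (B * A) := by rw [← conjTranspose_mul, sigColMax_conjTranspose]
    _ ≤ 1 := sigColMax_le_one_of_isStarProjection projection

lemma sigColMax_pinv_le {A : Matrix ι κ ℂ} (hA : 0 < sigRowMin A) :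
    sigColMax (pinv A) ≤ (sigRowMin A)⁻¹ := by
  classical
  have h : IsMoorePenrose A (pinv A) := isMoorePenrose_pinv
    ⟨_, isMoorePenrose_conjTranspose_mul_inv (isUnit_det_mul_conjTranspose_of_sigRowMin_pos hA)⟩
  rw [← one_div, le_div_iff₀' hA]
  exact h.sigRowMin_mul_sigColMax_le_one

end Pseudoinverse

section KhatriRao

variable {p k n : ℕ}

lemma vecMul_krt_transpose_apply (G : Matrix (Fin p) (Fin k) ℂ) (V : Matrix (Fin n) (Fin p) ℂ)
    (w : Fin p → ℂ) (j : Fin k) (l : Fin n) :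
    (w ᵥ* krt G Vᵀ) (j, l) = (V * diagonal w * G) l j := by
  simp only [vecMul, dotProduct, krt, of_apply, transpose_apply, mul_apply (M := V * diagonal w),
    mul_diagonal]
  exact Finset.sum_congr rfl fun i _ => by ring

lemma vnorm_vecMul_krt_transpose (G : Matrix (Fin p) (Fin k) ℂ) (V : Matrix (Fin n) (Fin p) ℂ)
    (w : Fin p → ℂ) : vnorm (w ᵥ* krt G Vᵀ) = fnorm (V * diagonal w * G) := by
  simp only [vnorm, fnorm, Fintype.sum_prod_type_right, vecMul_krt_transpose_apply]

lemma sigRowMin_mul_sigColMin_mul_vnorm_le_vnorm_vecMul_krt (G : Matrix (Fin p) (Fin k) ℂ)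
    (V : Matrix (Fin n) (Fin p) ℂ) (w : Fin p → ℂ) :
    sigRowMin G * sigColMin V * vnorm w ≤ vnorm (w ᵥ* krt G Vᵀ) :=
  calc sigRowMin G * sigColMin V * vnorm w
      = sigColMin V * fnorm (diagonal w) * sigRowMin G := by rw [fnorm_diagonal]; ring
    _ ≤ fnorm (V * diagonal w) * sigRowMin G :=
        mul_le_mul_of_nonneg_right (sigColMin_mul_fnorm_le V _) (sigRowMin_nonneg G)
    _ ≤ fnorm (V * diagonal w * G) := fnorm_mul_sigRowMin_le _ G
    _ = vnorm (w ᵥ* krt G Vᵀ) := (vnorm_vecMul_krt_transpose G V w).symm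

lemma sigRowMin_mul_sigColMin_le_sigRowMin_krt (G : Matrix (Fin p) (Fin k) ℂ)
    (V : Matrix (Fin n) (Fin p) ℂ) :
    sigRowMin G * sigColMin V ≤ sigRowMin (krt G Vᵀ) := by
  rcases isEmpty_or_nonempty (Fin p) with _ | _
  · rw [sigColMin_of_isEmpty, mul_zero]
    exact sigRowMin_nonneg _
  refine le_sigRowMin fun w hw => ?_
  simpa only [vnorm_star, hw, mul_one] using
    sigRowMin_mul_sigColMin_mul_vnorm_le_vnorm_vecMul_krt G V (star w)

end KhatriRao

/-- Bounds on the smallest singular value of the transposed Khatri–Rao product: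
`σ_p(G ⊙ᵀ Vᵀ) ≥ σ_p(G) σ_p(V)`; if moreover every column of `V` has unit norm, then
`σ_p(V) ≥ κ₂(V)⁻¹` (with `κ₂(V) = σ₁(V)/σ_p(V)`) and hence
`σ_p(G ⊙ᵀ Vᵀ) ≥ σ_p(G)/κ₂(V)`; in particular, if `p ≤ kn` and `G ⊙ᵀ Vᵀ` has full row rank
(and the right-hand side is finite, i.e. `σ_p(G) > 0` and `σ_p(V) > 0`), then
`‖(G ⊙ᵀ Vᵀ)†‖₂ ≤ σ_p(G)⁻¹ κ₂(V)`. -/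
theorem khatri_rao_sigma_min_bounds (n k p : ℕ)
    (G : Matrix (Fin p) (Fin k) ℂ) (V : Matrix (Fin n) (Fin p) ℂ) :
    sigRowMin G * sigColMin V ≤ sigRowMin (krt G Vᵀ) ∧
    ((∀ i, vnorm (fun l => V l i) = 1) →
      (sigColMax V / sigColMin V)⁻¹ ≤ sigColMin V ∧
      sigRowMin G / (sigColMax V / sigColMin V) ≤ sigRowMin (krt G Vᵀ)) ∧
    ((∀ i, vnorm (fun l => V l i) = 1) → p ≤ k * n → (krt G Vᵀ).rank = p →
      0 < sigRowMin G → 0 < sigColMin V →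
      sigColMax (pinv (krt G Vᵀ)) ≤ (sigRowMin G)⁻¹ * (sigColMax V / sigColMin V)) := by
  have krt_ge := sigRowMin_mul_sigColMin_le_sigRowMin_krt G V
  have inv_cond_le (hV : ∀ i, vnorm (fun l => V l i) = 1) :
      (sigColMax V / sigColMin V)⁻¹ ≤ sigColMin V :=
    inv_sigColMax_div_sigColMin_le_sigColMin fun i => (hV i).ge
  have krt_ge_div (hV : ∀ i, vnorm (fun l => V l i) = 1) :
      sigRowMin G / (sigColMax V / sigColMin V) ≤ sigRowMin (krt G Vᵀ) := by
    rw [div_eq_mul_inv]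
    exact (mul_le_mul_of_nonneg_left (inv_cond_le hV) (sigRowMin_nonneg G)).trans krt_ge
  refine ⟨krt_ge, fun hV => ⟨inv_cond_le hV, krt_ge_div hV⟩,
    fun hV _ _ hGpos hVpos => ?_⟩
  have cond_pos : 0 < sigColMax V / sigColMin V :=
    div_pos (hVpos.trans_le (sigColMin_le_sigColMax V)) hVpos
  calc sigColMax (pinv (krt G Vᵀ)) ≤ (sigRowMin (krt G Vᵀ))⁻¹ :=
        sigColMax_pinv_le ((mul_pos hGpos hVpos).trans_le krt_ge)
    _ ≤ (sigRowMin G / (sigColMax V / sigColMin V))⁻¹ :=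
        inv_anti₀ (div_pos hGpos cond_pos) (krt_ge_div hV)
    _ = (sigRowMin G)⁻¹ * (sigColMax V / sigColMin V) := by rw [inv_div, div_eq_inv_mul]
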